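/- As s → ∞, φ_s(x) → arcsin(x) locally uniformly on [0,1); that is, for every ε > 0, sup_{x ∈ [0, 1−ε]} |φ_s(x) − arcsin(x)| → 0 as s → ∞. -/

import Mathlib

open Real Set MeasureTheory Filter

/-!
Write `D = 1 - z^p - x²(z² - z^p) = (1 - x²z²) - (1 - x²) z^p` with `p = s - 1`, and
`A = 1 - x²z²`. The substitution `u = xz` gives `arcsin x = x ∫₀¹ dz / √A`, so `φ_s(x) - arcsin x`
is `x` times the integral of `1/√D - 1/√A = (A - D) / (√A √D (√A + √D))`. If `x² ≤ 1 - c` with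
`c > 0` and `p ≥ 1`, then `A ≥ c`, `D ≥ c(1 - z)` and `0 ≤ A - D ≤ z^p`, so the integrand lies
between `0` and `c⁻¹ c^(-1/2) z^p / √(1 - z)`, a bound independent of `x`. By dominated convergence,
with dominating function `1/√(1 - z)`, the integral of this bound tends to `0` as `p → ∞`.
-/

/-- The deviation-angle function `φ_s(x) = x ∫₀¹ dz / √(1 − z^(s−1) − x²(z² − z^(s−1)))`. -/
noncomputable def phiS (s x : ℝ) : ℝ :=
  x * ∫ z in (0:ℝ)..1, 1 / Real.sqrt (1 - z ^ (s - 1) - x ^ 2 * (z ^ 2 - z ^ (s - 1)))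

lemma intervalIntegrable_inv_sqrt_one_sub :
    IntervalIntegrable (fun z : ℝ => 1 / √(1 - z)) volume 0 1 := by
  have h : IntervalIntegrable (fun z : ℝ => z ^ (-(1 / 2) : ℝ)) volume 0 1 :=
    intervalIntegral.intervalIntegrable_rpow' (by norm_num)
  have h2 := (h.comp_sub_left 1).symm
  simp only [sub_zero, sub_self] at h2
  refine h2.congr ?_
  intro z hz
  rw [uIoc_of_le zero_le_one] at hz
  simp only
  rw [rpow_neg (by linarith [hz.2]), sqrt_eq_rpow, ← one_div]

lemma tendsto_integral_rpow_div_sqrt :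
    Tendsto (fun s : ℝ => ∫ z in (0:ℝ)..1, z ^ (s - 1) * (1 / √(1 - z))) atTop (nhds 0) := by
  have h0 : (0 : ℝ) = ∫ z in (0:ℝ)..1, (0:ℝ) := by simp
  nth_rewrite 2 [h0]
  refine intervalIntegral.tendsto_integral_filter_of_dominated_convergence
    (fun z => 1 / √(1 - z)) ?_ ?_ intervalIntegrable_inv_sqrt_one_sub ?_
  · exact Eventually.of_forall fun s => (by fun_prop : Measurable _).aestronglyMeasurable
  · filter_upwards [eventually_ge_atTop (1 : ℝ)] with s hs
    refine Eventually.of_forall fun z hz => ?_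
    rw [uIoc_of_le zero_le_one] at hz
    have h1 : z ^ (s - 1) ≤ 1 := rpow_le_one hz.1.le hz.2 (by linarith)
    have h2 : 0 ≤ z ^ (s - 1) := rpow_nonneg hz.1.le _
    have h3 : 0 ≤ 1 / √(1 - z) := by positivity
    rw [norm_of_nonneg (by positivity)]
    nlinarith
  · refine Eventually.of_forall fun z hz => ?_
    rw [uIoc_of_le zero_le_one] at hz
    rcases hz.2.lt_or_eq with h1 | rfl
    · have h2 := (tendsto_rpow_atTop_of_base_lt_one z (by linarith [hz.1]) h1).comp
        (tendsto_atTop_add_const_right atTop (-1 : ℝ) tendsto_id)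
      simpa [Function.comp_def, sub_eq_add_neg] using h2.mul_const (1 / √(1 - z))
    · simp

lemma arcsin_eq_mul_integral {x : ℝ} (hx0 : 0 ≤ x) (hx1 : x < 1) :
    IntervalIntegrable (fun z : ℝ => 1 / √(1 - x ^ 2 * z ^ 2)) volume 0 1 ∧
    arcsin x = x * ∫ z in (0:ℝ)..1, 1 / √(1 - x ^ 2 * z ^ 2) := by
  have hpos : ∀ z ∈ uIcc (0:ℝ) 1, 0 ≤ x * z ∧ x * z < 1 := by
    intro z hz
    rw [uIcc_of_le zero_le_one] at hz
    exact ⟨mul_nonneg hx0 hz.1, by nlinarith [hz.1, hz.2]⟩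
  have hcont : ContinuousOn (fun z : ℝ => 1 / √(1 - x ^ 2 * z ^ 2)) (uIcc 0 1) := by
    refine ContinuousOn.div (by fun_prop) (by fun_prop) fun z hz => ?_
    have := hpos z hz
    exact (sqrt_pos.2 (by nlinarith)).ne'
  refine ⟨hcont.intervalIntegrable, ?_⟩
  have h := intervalIntegral.integral_eq_sub_of_hasDerivAt (a := 0) (b := 1)
    (f := fun z => arcsin (x * z)) (f' := fun z => x * (1 / √(1 - x ^ 2 * z ^ 2)))
    (fun z hz => by
      have hz' := hpos z hz
      have h1 := (hasDerivAt_arcsin (x := x * z) (by linarith) (by linarith)).comp z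
        ((hasDerivAt_id z).const_mul x)
      refine h1.congr_deriv ?_
      rw [mul_pow]; ring)
    (hcont.intervalIntegrable.const_mul x)
  rw [intervalIntegral.integral_const_mul] at h
  simpa using h.symm

/-- The quantitative form of the identity
`1/√D - 1/√A = (A - D) / (√A √D (√A + √D))`. -/
lemma inv_sqrt_sub_bound {A D c w t : ℝ} (hc : 0 < c) (hw : 0 < w) (hA : c ≤ A)
    (hD : c * w ≤ D) (hDA : D ≤ A) (hAD : A - D ≤ t) :
    0 ≤ 1 / √D - 1 / √A ∧ 1 / √D - 1 / √A ≤ 1 / (c * √c) * (t * (1 / √w)) := by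
  have hD0 : 0 < D := lt_of_lt_of_le (by positivity) hD
  have hA0 : 0 < A := by linarith
  have hsD := sqrt_pos.2 hD0
  have hsA := sqrt_pos.2 hA0
  have hsc := sqrt_pos.2 hc
  have hsw := sqrt_pos.2 hw
  have hle : √c * √w ≤ √D := by
    rw [← sqrt_mul hc.le]; exact sqrt_le_sqrt hD
  refine ⟨sub_nonneg.2 (one_div_le_one_div_of_le hsD (sqrt_le_sqrt hDA)), ?_⟩
  have key : 1 / √D - 1 / √A = (A - D) / (√D * (√A * (√A + √D))) := by
    have e : A - D = (√A - √D) * (√A + √D) := by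
      nlinarith [sq_sqrt hD0.le, sq_sqrt hA0.le]
    rw [e]; field_simp
  have e2 : 1 / (c * √c) * (t * (1 / √w)) = t / ((√c * √w) * c) := by
    field_simp
  rw [key, e2]
  have hden : c ≤ √A * (√A + √D) := by
    nlinarith [mul_self_sqrt hA0.le, mul_pos hsA hsD]
  have ht : 0 ≤ t := by linarith
  gcongr

lemma abs_phiS_sub_arcsin_le {c x s : ℝ} (hc : 0 < c) (hx0 : 0 ≤ x) (hx1 : x < 1)
    (hxc : c ≤ 1 - x ^ 2) (hs : 2 ≤ s) :
    |phiS s x - arcsin x| ≤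
      1 / (c * √c) * ∫ z in (0:ℝ)..1, z ^ (s - 1) * (1 / √(1 - z)) := by
  obtain ⟨hiA, hA⟩ := arcsin_eq_mul_integral hx0 hx1
  have hest : ∀ z ∈ Ioc (0:ℝ) 1, 0 ≤ z ^ (s - 1) ∧ z ^ (s - 1) ≤ z ∧ z ^ 2 ≤ 1 := by
    intro z hz
    refine ⟨rpow_nonneg hz.1.le _, ?_, by nlinarith [hz.1, hz.2]⟩
    simpa using rpow_le_rpow_of_exponent_ge hz.1 hz.2 (by linarith : (1:ℝ) ≤ s - 1)
  have hlow : ∀ z ∈ Ioc (0:ℝ) 1,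
      c * (1 - z) ≤ 1 - z ^ (s - 1) - x ^ 2 * (z ^ 2 - z ^ (s - 1)) := by
    intro z hz
    obtain ⟨h1, h2, h3⟩ := hest z hz
    have a1 : c * (1 - z) ≤ (1 - x ^ 2) * (1 - z ^ (s - 1)) :=
      mul_le_mul hxc (by linarith) (by linarith [hz.2]) (by linarith)
    nlinarith [mul_nonneg (sq_nonneg x) (sub_nonneg.2 h3)]
  have hiD : IntervalIntegrable
      (fun z : ℝ => 1 / √(1 - z ^ (s - 1) - x ^ 2 * (z ^ 2 - z ^ (s - 1)))) volume 0 1 := by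
    refine (intervalIntegrable_inv_sqrt_one_sub.const_mul (1 / √c)).mono_fun
      (by fun_prop : Measurable _).aestronglyMeasurable ?_
    refine (ae_restrict_iff' measurableSet_uIoc).2 (Eventually.of_forall fun z hz => ?_)
    rw [uIoc_of_le zero_le_one] at hz
    beta_reduce
    rw [norm_of_nonneg (by positivity), norm_of_nonneg (by positivity)]
    rcases hz.2.lt_or_eq with h1 | rfl
    · have hw : 0 < 1 - z := by linarith
      rw [one_div_mul_one_div, ← sqrt_mul hc.le]
      exact one_div_le_one_div_of_le (sqrt_pos.2 (by positivity)) (sqrt_le_sqrt (hlow z hz))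
    · simp
  have hiB : IntervalIntegrable (fun z : ℝ => z ^ (s - 1) * (1 / √(1 - z))) volume 0 1 := by
    refine intervalIntegrable_inv_sqrt_one_sub.continuousOn_mul ?_
    exact (continuous_rpow_const (by linarith)).continuousOn
  have hbd : ∀ z ∈ Ioo (0:ℝ) 1, _ := fun z hz => by
    obtain ⟨h1, h2, h3⟩ := hest z ⟨hz.1, hz.2.le⟩
    have hx2 := sq_nonneg x
    exact inv_sqrt_sub_bound (A := 1 - x ^ 2 * z ^ 2)
      (D := 1 - z ^ (s - 1) - x ^ 2 * (z ^ 2 - z ^ (s - 1))) (w := 1 - z) (t := z ^ (s - 1))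
      hc (by linarith [hz.2]) (by nlinarith) (hlow z ⟨hz.1, hz.2.le⟩) (by nlinarith)
      (by nlinarith)
  have hI0 := intervalIntegral.integral_mono_on_of_le_Ioo zero_le_one
    (intervalIntegrable_const (c := (0:ℝ))) (hiD.sub hiA) (fun z hz => (hbd z hz).1)
  have hI1 := intervalIntegral.integral_mono_on_of_le_Ioo zero_le_one
    (hiD.sub hiA) (hiB.const_mul (1 / (c * √c))) (fun z hz => (hbd z hz).2)
  rw [intervalIntegral.integral_const_mul] at hI1
  rw [intervalIntegral.integral_sub hiD hiA] at hI0 hI1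
  simp only [intervalIntegral.integral_zero] at hI0
  rw [hA, phiS, ← mul_sub, abs_of_nonneg (mul_nonneg hx0 hI0)]
  exact (mul_le_of_le_one_left hI0 hx1.le).trans hI1

/-- As `s → ∞`, `φ_s(x) → arcsin x` locally uniformly on `[0,1)`: for every `ε > 0`,
uniformly on `[0, 1 − ε]`. -/
theorem stmt2 (ε : ℝ) (hε : 0 < ε) :
    TendstoUniformlyOn (fun s x => phiS s x) Real.arcsin atTop (Icc 0 (1 - ε)) := by
  rw [Metric.tendstoUniformlyOn_iff]
  intro δ hδ
  rcases lt_or_ge 1 ε with h | h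
  · exact Eventually.of_forall fun s x hx => absurd (hx.1.trans hx.2) (by linarith)
  -- On `[0, 1 - ε]` one has `1 - x² ≥ 1 - x ≥ ε`, so `c = ε` works.
  have ht := tendsto_integral_rpow_div_sqrt.const_mul (1 / (ε * √ε))
  rw [mul_zero] at ht
  filter_upwards [ht.eventually (gt_mem_nhds hδ), eventually_ge_atTop (2 : ℝ)] with s hs hs2 x hx
  rw [dist_comm, Real.dist_eq]
  exact (abs_phiS_sub_arcsin_le hε hx.1 (by linarith [hx.2])
    (by nlinarith [hx.1, hx.2]) hs2).trans_lt hs
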